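/- arXiv:0807.2648 — 2 statements merged into one kernel-verified Lean document; each statement's English description precedes it below -/
import Mathlib

section
/- For a double-integrator robot with speed bound v_max > 0 and acceleration bound u_max > 0, starting from any configuration g = (p, v) ∈ ℝ² × ℝ² with ‖v‖ = v₀ satisfying 0 < v₀ ≤ v_max, the area of the small-time reachable set satisfies liminf_{t→0⁺} Area(R_t(g)) / t³ ≥ v₀ u_max / 3. -/
open MeasureTheory Filter Topology Real

noncomputable section

/-- The plane `ℝ²` with the Euclidean norm. -/
abbrev Plane : Type := EuclideanSpace ℝ (Fin 2)

/-- A double-integrator (DI) trajectory with speed bound `vmax` and acceleration bound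
`umax`: a twice continuously differentiable curve in the plane whose velocity and
acceleration are bounded by `vmax` and `umax` respectively. -/
def IsDITraj (vmax umax : ℝ) (x : ℝ → Plane) : Prop :=
  ContDiff ℝ 2 x ∧ (∀ t, ‖deriv x t‖ ≤ vmax) ∧ (∀ t, ‖deriv (deriv x) t‖ ≤ umax)

/-- Minimum travel time of a DI robot from configuration `(p, v)` to the point `q`. -/
def tauDI (vmax umax : ℝ) (p v q : Plane) : ℝ :=
  sInf {T : ℝ | 0 ≤ T ∧ ∃ x : ℝ → Plane, IsDITraj vmax umax x ∧
    x 0 = p ∧ deriv x 0 = v ∧ x T = q}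

/-- Reachable set at time `t` of a DI robot starting at configuration `(p, v)`. -/
def reachDI (vmax umax : ℝ) (p v : Plane) (t : ℝ) : Set Plane :=
  {q | tauDI vmax umax p v q ≤ t}


lemma arctan_le_self_aux {x : ℝ} (hx : 0 ≤ x) : Real.arctan x ≤ x := by
  have h := Real.le_tan (Real.arctan_nonneg.2 hx) (Real.arctan_lt_pi_div_two x)
  rwa [Real.tan_arctan] at h

lemma exists_frame (v : Plane) (v₀ : ℝ) (hv₀ : ‖v‖ = v₀) (h0 : 0 < v₀) :
    ∃ L : ℂ ≃ₗᵢ[ℝ] Plane, L (v₀ : ℂ) = v := by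
  set B := Complex.orthonormalBasisOneI.repr with hB
  have hn : ‖B.symm v‖ = v₀ := by rw [LinearIsometryEquiv.norm_map, hv₀]
  have hw : ‖B.symm v / (v₀ : ℂ)‖ = 1 := by
    rw [norm_div, hn, Complex.norm_real, Real.norm_of_nonneg h0.le, div_self h0.ne']
  let w : Circle := ⟨B.symm v / (v₀ : ℂ), by simpa [Submonoid.unitSphere] using hw⟩
  refine ⟨(rotation w).trans B, ?_⟩
  have hne : (v₀ : ℂ) ≠ 0 := by exact_mod_cast h0.ne'
  rw [LinearIsometryEquiv.trans_apply, rotation_apply]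
  have : (w : ℂ) * (v₀ : ℂ) = B.symm v := by
    change B.symm v / (v₀ : ℂ) * (v₀ : ℂ) = _
    field_simp
  rw [this, LinearIsometryEquiv.apply_symm_apply]

lemma isDITraj_of (vmax umax v₀ ω : ℝ) (h0 : 0 < v₀) (hle : v₀ ≤ vmax)
    (hω : |ω| * v₀ ≤ umax) (p : Plane) (L : ℂ ≃ₗᵢ[ℝ] Plane) (c : ℝ → ℂ)
    (hc : ∀ τ : ℝ, HasDerivAt c (v₀ * Complex.exp (ω * τ * Complex.I)) τ) :
    IsDITraj vmax umax (fun τ => p + L (c τ)) ∧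
      deriv (fun τ => p + L (c τ)) 0 = L v₀ := by
  have hexp : ∀ τ : ℝ, ‖Complex.exp (ω * τ * Complex.I)‖ = 1 := by
    intro τ
    have := Complex.norm_exp_ofReal_mul_I (ω * τ)
    push_cast at this
    exact this
  have hLd : ∀ (f : ℝ → ℂ) (f' : ℂ) (τ : ℝ), HasDerivAt f f' τ →
      HasDerivAt (fun τ => L (f τ)) (L f') τ := by
    intro f f' τ h
    exact (L.toContinuousLinearEquiv.toContinuousLinearMap.hasFDerivAt.comp_hasDerivAt τ h)
  have h1 : ∀ τ : ℝ, HasDerivAt (fun τ => p + L (c τ))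
      (L (v₀ * Complex.exp (ω * τ * Complex.I))) τ := fun τ => (hLd _ _ _ (hc τ)).const_add p
  have hd1 : deriv (fun τ => p + L (c τ)) =
      fun τ : ℝ => L (v₀ * Complex.exp (ω * τ * Complex.I)) := funext fun τ => (h1 τ).deriv
  have h2 : ∀ τ : ℝ, HasDerivAt (fun τ : ℝ => L (v₀ * Complex.exp (ω * τ * Complex.I)))
      (L (v₀ * (Complex.exp (ω * τ * Complex.I) * (ω * Complex.I)))) τ := by
    intro τ
    apply hLd
    have h : HasDerivAt (fun z : ℂ => (v₀ : ℂ) * Complex.exp (ω * z * Complex.I))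
        (v₀ * (Complex.exp (ω * τ * Complex.I) * (ω * Complex.I))) (τ : ℂ) := by
      have := ((((hasDerivAt_id (τ : ℂ)).const_mul (ω : ℂ)).mul_const Complex.I).cexp).const_mul
        (v₀ : ℂ)
      simpa using this
    exact h.comp_ofReal
  have hsm : ContDiff ℝ 1 (fun τ : ℝ => L (v₀ * Complex.exp (ω * τ * Complex.I))) := by
    refine L.contDiff.comp ?_
    have : ContDiff ℝ 1 (fun τ : ℝ => (τ : ℂ)) := Complex.ofRealCLM.contDiff
    fun_prop
  refine ⟨⟨?_, ?_, ?_⟩, ?_⟩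
  · have : (2 : WithTop ℕ∞) = 1 + 1 := by norm_num
    rw [this, contDiff_succ_iff_deriv]
    refine ⟨fun τ => (h1 τ).differentiableAt, ?_, ?_⟩
    · intro h; simp at h
    · rw [hd1]; exact hsm
  · intro τ
    rw [hd1]
    simp only [LinearIsometryEquiv.norm_map, norm_mul, hexp, Complex.norm_real]
    rw [Real.norm_of_nonneg h0.le]; linarith
  · intro τ
    rw [hd1, (h2 τ).deriv]
    simp only [LinearIsometryEquiv.norm_map, norm_mul, hexp, Complex.norm_real, Complex.norm_I]
    rw [Real.norm_of_nonneg h0.le, Real.norm_eq_abs]; linarith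
  · rw [hd1]; simp

/-- The circular arc reaching `X + iY`. -/
lemma exists_arc (v₀ u X Y : ℝ) (h0 : 0 < v₀) (hu : 0 < u) (hX : 0 < X)
    (hY : |Y| ≤ u / (2 * v₀ ^ 2) * X ^ 2) :
    ∃ (s ω : ℝ) (c : ℝ → ℂ), 0 ≤ s ∧ s * v₀ * X ≤ X ^ 2 + Y ^ 2 ∧ |ω| * v₀ ≤ u ∧ c 0 = 0 ∧
      (∀ τ : ℝ, HasDerivAt c (v₀ * Complex.exp (ω * τ * Complex.I)) τ) ∧
      c s = ⟨X, Y⟩ := by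
  by_cases hY0 : Y = 0
  · subst hY0
    refine ⟨X / v₀, 0, fun τ => v₀ * τ, by positivity, ?_, by simpa using hu.le, by simp, ?_, ?_⟩
    · rw [div_mul_cancel₀ _ h0.ne']; nlinarith
    · intro τ
      have : HasDerivAt (fun z : ℂ => (v₀ : ℂ) * z) (v₀ * 1) (τ : ℂ) :=
        (hasDerivAt_id _).const_mul _
      simpa using this.comp_ofReal
    · apply Complex.ext
      · simp; field_simp
      · simp
  · have hD : 0 < X ^ 2 + Y ^ 2 := by positivity
    set ω : ℝ := 2 * v₀ * Y / (X ^ 2 + Y ^ 2) with hω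
    have hω0 : ω ≠ 0 := by rw [hω]; positivity
    set θ := Real.arctan (Y / X) with hθ
    have hs : 2 * θ / ω = (X ^ 2 + Y ^ 2) / v₀ * (θ / Y) := by
      rw [hω]; field_simp
    have hcos : Real.cos θ ^ 2 = X ^ 2 / (X ^ 2 + Y ^ 2) := by
      rw [hθ, Real.cos_sq_arctan]; field_simp
    have hcpos : 0 < Real.cos θ := Real.cos_arctan_pos _
    have htan : Real.sin θ = Y / X * Real.cos θ := by
      have := Real.tan_arctan (Y / X)
      rw [← hθ, Real.tan_eq_sin_div_cos, div_eq_iff hcpos.ne'] at this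
      exact this
    have hr : 0 ≤ θ / Y ∧ θ / Y ≤ 1 / X := by
      rcases lt_or_gt_of_ne hY0 with hn | hp
      · have hneg : Y / X < 0 := div_neg_of_neg_of_pos hn hX
        have h1 : θ < 0 := Real.arctan_lt_zero.2 hneg
        have h2 : Y / X ≤ θ := by
          have h3 : -(Y / X) ≥ Real.arctan (-(Y / X)) := arctan_le_self_aux (by linarith)
          rw [Real.arctan_neg] at h3; linarith
        refine ⟨div_nonneg_of_nonpos h1.le hn.le, ?_⟩
        rw [div_le_iff_of_neg hn]
        calc 1 / X * Y = Y / X := by ring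
          _ ≤ θ := h2
      · have hpos : 0 < Y / X := div_pos hp hX
        have h1 : 0 < θ := Real.arctan_pos.2 hpos
        have h2 : θ ≤ Y / X := arctan_le_self_aux hpos.le
        refine ⟨by positivity, ?_⟩
        rw [div_le_iff₀ hp]
        calc θ ≤ Y / X := h2
          _ = 1 / X * Y := by ring
    refine ⟨2 * θ / ω, ω,
      fun τ => v₀ * ((Complex.exp (ω * τ * Complex.I) - 1) / (ω * Complex.I)), ?_, ?_, ?_, ?_, ?_, ?_⟩
    · rw [hs]; exact mul_nonneg (by positivity) hr.1
    · rw [hs]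
      calc (X ^ 2 + Y ^ 2) / v₀ * (θ / Y) * v₀ * X = (X ^ 2 + Y ^ 2) * X * (θ / Y) := by
            field_simp
        _ ≤ (X ^ 2 + Y ^ 2) * X * (1 / X) := by
            apply mul_le_mul_of_nonneg_left hr.2; positivity
        _ = X ^ 2 + Y ^ 2 := by field_simp
    · rw [hω, abs_div, abs_of_pos hD, abs_mul, abs_of_pos (by positivity : 0 < 2 * v₀)]
      rw [div_mul_eq_mul_div, div_le_iff₀ hD]
      have : |Y| * (2 * v₀ ^ 2) ≤ u * X ^ 2 := by
        calc |Y| * (2 * v₀ ^ 2) ≤ u / (2 * v₀ ^ 2) * X ^ 2 * (2 * v₀ ^ 2) := by gcongr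
          _ = u * X ^ 2 := by field_simp
      nlinarith [mul_nonneg hu.le (sq_nonneg Y)]
    · simp
    · intro τ
      have hωc : (ω : ℂ) ≠ 0 := by exact_mod_cast hω0
      have h : HasDerivAt
          (fun z : ℂ => (v₀ : ℂ) * ((Complex.exp (ω * z * Complex.I) - 1) / (ω * Complex.I)))
          (v₀ * Complex.exp (ω * τ * Complex.I)) (τ : ℂ) := by
        have := ((((((hasDerivAt_id (τ : ℂ)).const_mul (ω : ℂ)).mul_const
          Complex.I).cexp).sub_const 1).div_const (ω * Complex.I)).const_mul (v₀ : ℂ)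
        refine HasDerivAt.congr_deriv this ?_
        have hI := mul_ne_zero hωc Complex.I_ne_zero
        rw [mul_one, mul_div_assoc, div_self hI, mul_one]
        simp only [id]
      exact h.comp_ofReal
    · have hωc : (ω : ℂ) ≠ 0 := by exact_mod_cast hω0
      have he : (ω : ℂ) * ((2 * θ / ω : ℝ) : ℂ) * Complex.I = ((2 * θ : ℝ) : ℂ) * Complex.I := by
        push_cast; field_simp
      simp only [he]
      rw [Complex.exp_mul_I, ← Complex.ofReal_cos, ← Complex.ofReal_sin]
      have hc2 : Real.cos (2 * θ) = 1 - 2 * (Y ^ 2 / (X ^ 2 + Y ^ 2)) := by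
        rw [Real.cos_two_mul, hcos]; field_simp; ring
      have hs2 : Real.sin (2 * θ) = 2 * (X * Y / (X ^ 2 + Y ^ 2)) := by
        rw [Real.sin_two_mul, htan]
        calc 2 * (Y / X * Real.cos θ) * Real.cos θ = 2 * (Y / X) * Real.cos θ ^ 2 := by ring
          _ = _ := by rw [hcos]; field_simp
      have key : (v₀ : ℂ) * ((((Real.cos (2 * θ) : ℝ) : ℂ) + (Real.sin (2 * θ) : ℝ) * Complex.I - 1))
          = (⟨X, Y⟩ : ℂ) * (ω * Complex.I) := by
        apply Complex.ext
        · simp [-Complex.ofReal_cos, -Complex.ofReal_sin]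
          rw [hc2, hω]; field_simp; ring
        · simp [-Complex.ofReal_cos, -Complex.ofReal_sin]
          rw [hs2, hω]; field_simp
      rw [← mul_div_assoc, key, mul_div_assoc, div_self, mul_one]
      exact mul_ne_zero hωc Complex.I_ne_zero

lemma mem_reach (vmax umax v₀ t a X Y : ℝ) (humax : 0 < umax) (h0 : 0 < v₀) (hle : v₀ ≤ vmax)
    (p v : Plane) (L : ℂ ≃ₗᵢ[ℝ] Plane) (hL : L (v₀ : ℂ) = v)
    (ha : a * (1 + (umax / (2 * v₀ ^ 2)) ^ 2 * a ^ 2) ≤ v₀ * t)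
    (hX : 0 < X) (hXa : X ≤ a) (hY : |Y| ≤ umax / (2 * v₀ ^ 2) * X ^ 2) :
    p + L ⟨X, Y⟩ ∈ reachDI vmax umax p v t := by
  obtain ⟨s, ω, c, hs, hsX, hω, hc0, hc, hcs⟩ := exists_arc v₀ umax X Y h0 humax hX hY
  obtain ⟨hT, hd⟩ := isDITraj_of vmax umax v₀ ω h0 hle hω p L c hc
  have hst : s ≤ t := by
    set k := umax / (2 * v₀ ^ 2)
    have h1 : Y ^ 2 ≤ (k * X ^ 2) ^ 2 := by
      rw [← sq_abs Y]; gcongr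
    have h2 : s * v₀ ≤ X * (1 + k ^ 2 * X ^ 2) := by
      refine le_of_mul_le_mul_right ?_ hX
      calc s * v₀ * X ≤ X ^ 2 + Y ^ 2 := hsX
        _ ≤ X ^ 2 + (k * X ^ 2) ^ 2 := by linarith
        _ = _ := by ring
    have h3 : X * (1 + k ^ 2 * X ^ 2) ≤ a * (1 + k ^ 2 * a ^ 2) := by gcongr; linarith
    refine le_of_mul_le_mul_right ?_ h0
    linarith
  refine le_trans (b := s) ?_ hst
  unfold tauDI
  refine csInf_le ⟨0, fun T hT => hT.1⟩ ⟨hs, _, hT, ?_, ?_, ?_⟩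
  · simp [hc0]
  · rw [hd, hL]
  · simp [hcs]

lemma area_lower (vmax umax v₀ t a : ℝ) (humax : 0 < umax) (h0 : 0 < v₀) (hle : v₀ ≤ vmax)
    (p v : Plane) (hv₀ : ‖v‖ = v₀) (ha0 : 0 ≤ a)
    (ha : a * (1 + (umax / (2 * v₀ ^ 2)) ^ 2 * a ^ 2) ≤ v₀ * t) :
    ENNReal.ofReal (umax / v₀ ^ 2 * a ^ 3 / 3) ≤ volume (reachDI vmax umax p v t) := by
  obtain ⟨L, hL⟩ := exists_frame v v₀ hv₀ h0
  set k := umax / (2 * v₀ ^ 2) with hk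
  have hkpos : 0 < k := by positivity
  have hmp : MeasurePreserving (fun z : ℂ => p + L z) volume volume :=
    (measurePreserving_add_left volume p).comp L.measurePreserving
  have hemb : MeasurableEmbedding (fun z : ℂ => p + L z) :=
    (measurableEmbedding_addLeft p).comp L.toHomeomorph.measurableEmbedding
  rw [← hmp.measure_preimage_emb hemb]
  have hcp := Complex.volume_preserving_equiv_real_prod.symm
  rw [← hcp.measure_preimage_emb Complex.measurableEquivRealProd.symm.measurableEmbedding]
  have hsub : regionBetween (fun x : ℝ => -(k * x ^ 2)) (fun x => k * x ^ 2) (Set.Ioc 0 a) ⊆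
      Complex.measurableEquivRealProd.symm ⁻¹'
        ((fun z : ℂ => p + L z) ⁻¹' reachDI vmax umax p v t) := by
    rintro ⟨X, Y⟩ ⟨hX, hY⟩
    have hY' : |Y| ≤ k * X ^ 2 := abs_le.2 ⟨hY.1.le, hY.2.le⟩
    exact mem_reach vmax umax v₀ t a X Y humax h0 hle p v L hL ha hX.1 hX.2 hY'
  refine le_trans (le_of_eq ?_) (measure_mono hsub)
  have hi1 : IntegrableOn (fun x : ℝ => k * x ^ 2) (Set.Ioc 0 a) := by
    have : Continuous (fun x : ℝ => k * x ^ 2) := by fun_prop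
    exact this.integrableOn_Ioc
  have hi2 : IntegrableOn (fun x : ℝ => -(k * x ^ 2)) (Set.Ioc 0 a) := hi1.neg
  rw [Measure.volume_eq_prod, volume_regionBetween_eq_integral hi2 hi1 measurableSet_Ioc]
  · congr 1
    rw [← intervalIntegral.integral_of_le ha0]
    have : ∀ y : ℝ, ((fun x : ℝ => k * x ^ 2) - fun x : ℝ => -(k * x ^ 2)) y = 2 * k * y ^ 2 := by
      intro y; simp; ring
    simp only [this]
    rw [intervalIntegral.integral_const_mul, integral_pow, hk]
    norm_num
    field_simp
  · intro x _
    have : 0 ≤ k * x ^ 2 := by positivity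
    linarith

/-- small-time lower bound on the area of the reachable set of a DI robot
with nonzero initial speed: `liminf_{t→0⁺} Area(R_t(g)) / t³ ≥ v₀ u_max / 3`. -/
theorem di_reachable_area_lower_bound
    (vmax umax v₀ : ℝ) (hvmax : 0 < vmax) (humax : 0 < umax)
    (p v : Plane) (hv₀ : ‖v‖ = v₀) (h0 : 0 < v₀) (hle : v₀ ≤ vmax) :
    ENNReal.ofReal (v₀ * umax / 3) ≤
      Filter.liminf
        (fun t : ℝ => volume (reachDI vmax umax p v t) / ENNReal.ofReal (t ^ 3))
        (𝓝[>] 0) := by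
  set k := umax / (2 * v₀ ^ 2) with hk
  have hlim : Tendsto (fun t : ℝ => ENNReal.ofReal (v₀ * umax / 3 / (1 + k ^ 2 * (v₀ * t) ^ 2) ^ 3))
      (𝓝[>] 0) (𝓝 (ENNReal.ofReal (v₀ * umax / 3))) := by
    apply (ENNReal.continuous_ofReal.tendsto _).comp
    have hcont : Continuous (fun t : ℝ => v₀ * umax / 3 / (1 + k ^ 2 * (v₀ * t) ^ 2) ^ 3) := by
      refine Continuous.div (by fun_prop) (by fun_prop) ?_
      intro t; positivity
    have := hcont.tendsto 0
    simp only [mul_zero, ne_eq, OfNat.ofNat_ne_zero, not_false_eq_true, zero_pow, add_zero,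
      one_pow, div_one] at this
    exact this.mono_left nhdsWithin_le_nhds
  rw [← hlim.liminf_eq]
  refine Filter.liminf_le_liminf ?_
  filter_upwards [self_mem_nhdsWithin] with t ht
  have ht : 0 < t := ht
  have hD : 0 < 1 + k ^ 2 * (v₀ * t) ^ 2 := by positivity
  set a := v₀ * t / (1 + k ^ 2 * (v₀ * t) ^ 2) with ha
  have ha0 : 0 < a := by positivity
  have hale : a ≤ v₀ * t := by
    apply div_le_self (by positivity)
    nlinarith [sq_nonneg (k * (v₀ * t))]
  have hcond : a * (1 + k ^ 2 * a ^ 2) ≤ v₀ * t := by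
    calc a * (1 + k ^ 2 * a ^ 2) ≤ a * (1 + k ^ 2 * (v₀ * t) ^ 2) := by gcongr
      _ = v₀ * t := by rw [ha]; field_simp
  have harea := area_lower vmax umax v₀ t a humax h0 hle p v hv₀ ha0.le hcond
  have ht3 : 0 < t ^ 3 := by positivity
  refine le_trans (le_of_eq ?_) (ENNReal.div_le_div_right harea _)
  rw [← ENNReal.ofReal_div_of_pos ht3]
  congr 1
  rw [ha]
  field_simp
end
end

section
/- For a differential-drive robot with wheel-speed bound w_max > 0 and half-axle length ρ > 0, starting from any configuration g = (p, θ₀) ∈ ℝ² × ℝ, the integral of the minimum travel time over the small-time reachable set satisfies liminf_{t→0⁺} (∫_{R_t(g)} τ_DD(g, q) dq) / t⁴ ≥ w_max³ / (6ρ), where the integral is with respect to two-dimensional Lebesgue measure. -/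
open MeasureTheory Filter Topology Real

noncomputable section

/-- A differential-drive (DD) trajectory with wheel-speed bound `wmax` and half-axle
length `ρ`: coordinates `x y θ` driven by measurable wheel-speed controls `wl, wr`
bounded by `wmax`, satisfying (in integral form) `x' = (wl+wr)/2 ⬝ cos θ`,
`y' = (wl+wr)/2 ⬝ sin θ`, `θ' = (wr - wl)/(2ρ)`. -/
def IsDDTraj (wmax ρ : ℝ) (x y θ : ℝ → ℝ) : Prop :=
  ∃ wl wr : ℝ → ℝ, Measurable wl ∧ Measurable wr ∧
    (∀ t, |wl t| ≤ wmax) ∧ (∀ t, |wr t| ≤ wmax) ∧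
    (∀ t, x t = x 0 + ∫ s in (0:ℝ)..t, (wl s + wr s) / 2 * Real.cos (θ s)) ∧
    (∀ t, y t = y 0 + ∫ s in (0:ℝ)..t, (wl s + wr s) / 2 * Real.sin (θ s)) ∧
    (∀ t, θ t = θ 0 + ∫ s in (0:ℝ)..t, (wr s - wl s) / (2 * ρ))

/-- Minimum travel time of a DD robot from configuration `(p, θ₀)` to the point `q`. -/
def tauDD (wmax ρ : ℝ) (p : Plane) (θ₀ : ℝ) (q : Plane) : ℝ :=
  sInf {T : ℝ | 0 ≤ T ∧ ∃ x y θ : ℝ → ℝ, IsDDTraj wmax ρ x y θ ∧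
    x 0 = p 0 ∧ y 0 = p 1 ∧ θ 0 = θ₀ ∧ x T = q 0 ∧ y T = q 1}

/-- Reachable set at time `t` of a DD robot starting at configuration `(p, θ₀)`. -/
def reachDD (wmax ρ : ℝ) (p : Plane) (θ₀ : ℝ) (t : ℝ) : Set Plane :=
  {q | tauDD wmax ρ p θ₀ q ≤ t}


/-- Reachability between configurations in time `T`. -/
def DDReach (wmax ρ T x0 y0 θ0 x1 y1 θ1 : ℝ) : Prop :=
  ∃ x y θ : ℝ → ℝ, IsDDTraj wmax ρ x y θ ∧
    x 0 = x0 ∧ y 0 = y0 ∧ θ 0 = θ0 ∧ x T = x1 ∧ y T = y1 ∧ θ T = θ1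

lemma dd_intervalIntegrable {f : ℝ → ℝ} (hf : Measurable f) {C : ℝ} (hC : ∀ s, |f s| ≤ C)
    (a b : ℝ) : IntervalIntegrable f volume a b := by
  rw [intervalIntegrable_iff]
  refine Measure.integrableOn_of_bounded (M := C) ?_ hf.aestronglyMeasurable ?_
  · simp
  · exact Eventually.of_forall fun s => by simpa using hC s

lemma dd_glue {f1 f2 F1 F2 : ℝ → ℝ} {T : ℝ} (hT : 0 ≤ T)
    (h1 : ∀ a b, IntervalIntegrable f1 volume a b) (h2 : ∀ a b, IntervalIntegrable f2 volume a b)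
    (e1 : ∀ t, F1 t = F1 0 + ∫ s in (0:ℝ)..t, f1 s)
    (e2 : ∀ t, F2 t = F2 0 + ∫ s in (0:ℝ)..t, f2 s)
    (hF : F1 T = F2 0) (t : ℝ) :
    (if t < T then F1 t else F2 (t - T)) = (if (0:ℝ) < T then F1 0 else F2 (0 - T)) +
      ∫ s in (0:ℝ)..t, (if s < T then f1 s else f2 (s - T)) := by
  have h0 : (if (0:ℝ) < T then F1 0 else F2 (0 - T)) = F1 0 := by
    split_ifs with h
    · rfl
    · have : T = 0 := le_antisymm (not_lt.mp h) hT
      subst this; simp [hF]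
  have hA : ∀ t, t ≤ T → ∫ s in (0:ℝ)..t, (if s < T then f1 s else f2 (s - T))
      = ∫ s in (0:ℝ)..t, f1 s := by
    intro t ht
    apply intervalIntegral.integral_congr_ae
    have : ∀ᵐ s : ℝ, s ≠ T := by simp [ae_iff]
    filter_upwards [this] with s hs hs'
    have : s ≤ T := by
      rcases Set.mem_uIoc.mp hs' with h | h
      · linarith [h.2]
      · linarith [h.2]
    rw [if_pos (lt_of_le_of_ne this hs)]
  rw [h0]
  split_ifs with h
  · rw [hA t h.le, ← e1]
  · push Not at h
    have hB : ∫ s in T..t, (if s < T then f1 s else f2 (s - T)) = ∫ s in T..t, f2 (s - T) := by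
      apply intervalIntegral.integral_congr
      intro s hs
      rw [Set.uIcc_of_le h] at hs
      simp [not_lt.mpr hs.1]
    have i1 : IntervalIntegrable (fun s => if s < T then f1 s else f2 (s - T)) volume 0 T := by
      refine (h1 0 T).congr_ae ?_
      have : ∀ᵐ s : ℝ, s ≠ T := by simp [ae_iff]
      rw [Filter.EventuallyEq, ae_restrict_iff' measurableSet_uIoc]
      filter_upwards [this] with s hs hs'
      rw [Set.uIoc_of_le hT] at hs'
      rw [if_pos (lt_of_le_of_ne hs'.2 hs)]
    have i2 : IntervalIntegrable (fun s => if s < T then f1 s else f2 (s - T)) volume T t := by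
      have := (h2 0 (t-T)).comp_sub_right T
      simp only [zero_add, sub_add_cancel] at this
      refine this.congr ?_
      intro s hs
      rw [Set.uIoc_of_le h] at hs
      simp [not_lt.mpr hs.1.le]
    rw [← intervalIntegral.integral_add_adjacent_intervals i1 i2, hA T le_rfl, hB,
      intervalIntegral.integral_comp_sub_right, sub_self, e2 (t - T), ← hF, e1 T]
    ring

lemma dd_meas_theta {wmax ρ : ℝ} {wl wr θ : ℝ → ℝ} (hl : Measurable wl)
    (hr : Measurable wr) (bl : ∀ t, |wl t| ≤ wmax) (br : ∀ t, |wr t| ≤ wmax)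
    (hθ : ∀ t, θ t = θ 0 + ∫ s in (0:ℝ)..t, (wr s - wl s) / (2 * ρ)) :
    Measurable θ ∧ ∀ a b, IntervalIntegrable (fun s => (wr s - wl s) / (2 * ρ)) volume a b := by
  have hi : ∀ a b, IntervalIntegrable (fun s => (wr s - wl s) / (2 * ρ)) volume a b := by
    refine dd_intervalIntegrable (by fun_prop) (C := (wmax + wmax) / |2 * ρ|) ?_
    intro s
    rw [abs_div]
    gcongr
    exact (abs_sub _ _).trans (add_le_add (br s) (bl s))
  refine ⟨?_, hi⟩
  have : θ = fun t => θ 0 + ∫ s in (0:ℝ)..t, (wr s - wl s) / (2 * ρ) := funext hθ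
  rw [this]
  exact (continuous_const.add (intervalIntegral.continuous_primitive hi 0)).measurable

lemma dd_v_bound {wmax a b c : ℝ} (ha : |a| ≤ wmax) (hb : |b| ≤ wmax) (hc : |c| ≤ 1) :
    |(a + b) / 2 * c| ≤ wmax := by
  rw [abs_mul]
  have h1 : |(a+b)/2| ≤ wmax := by
    rw [abs_le] at *; constructor <;> linarith
  calc _ ≤ wmax * 1 := mul_le_mul h1 hc (abs_nonneg _) ((abs_nonneg _).trans ha)
    _ = wmax := mul_one _

lemma DDReach.trans {wmax ρ T1 T2 x0 y0 θ0 x1 y1 θ1 x2 y2 θ2 : ℝ} (hT1 : 0 ≤ T1) (hT2 : 0 ≤ T2)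
    (h1 : DDReach wmax ρ T1 x0 y0 θ0 x1 y1 θ1) (h2 : DDReach wmax ρ T2 x1 y1 θ1 x2 y2 θ2) :
    DDReach wmax ρ (T1 + T2) x0 y0 θ0 x2 y2 θ2 := by
  obtain ⟨x, y, θ, ⟨wl, wr, ml, mr, bl, br, hx, hy, hθ⟩, hx0, hy0, hθ0, hx1, hy1, hθ1⟩ := h1
  obtain ⟨x', y', θ', ⟨wl', wr', ml', mr', bl', br', hx', hy', hθ'⟩,
    hx0', hy0', hθ0', hx1', hy1', hθ1'⟩ := h2
  obtain ⟨mθ, iθ⟩ := dd_meas_theta ml mr bl br hθ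
  obtain ⟨mθ', iθ'⟩ := dd_meas_theta ml' mr' bl' br' hθ'
  have gx := dd_glue hT1
    (dd_intervalIntegrable (by fun_prop) fun s => dd_v_bound (bl s) (br s) (abs_cos_le_one (θ s)))
    (dd_intervalIntegrable (by fun_prop) fun s =>
      dd_v_bound (bl' s) (br' s) (abs_cos_le_one (θ' s))) hx hx' (hx1.trans hx0'.symm)
  have gy := dd_glue hT1
    (dd_intervalIntegrable (by fun_prop) fun s => dd_v_bound (bl s) (br s) (abs_sin_le_one (θ s)))
    (dd_intervalIntegrable (by fun_prop) fun s =>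
      dd_v_bound (bl' s) (br' s) (abs_sin_le_one (θ' s))) hy hy' (hy1.trans hy0'.symm)
  have gθ := dd_glue hT1 iθ iθ' hθ hθ' (hθ1.trans hθ0'.symm)
  have ini : ∀ {F1 F2 : ℝ → ℝ}, F1 T1 = F2 0 →
      (if (0:ℝ) < T1 then F1 0 else F2 (0 - T1)) = F1 0 := by
    intro F1 F2 hF
    split_ifs with h
    · rfl
    · have : T1 = 0 := le_antisymm (not_lt.mp h) hT1
      rw [this] at hF
      rw [this]; simp [hF]
  refine ⟨fun t => if t < T1 then x t else x' (t - T1), fun t => if t < T1 then y t else y' (t - T1),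
    fun t => if t < T1 then θ t else θ' (t - T1),
    ⟨fun t => if t < T1 then wl t else wl' (t - T1), fun t => if t < T1 then wr t else wr' (t - T1),
      ?_, ?_, ?_, ?_, ?_, ?_, ?_⟩, ?_, ?_, ?_, ?_, ?_, ?_⟩
  · exact Measurable.ite measurableSet_Iio ml (by fun_prop)
  · exact Measurable.ite measurableSet_Iio mr (by fun_prop)
  · intro t; dsimp only; split_ifs
    exacts [bl _, bl' _]
  · intro t; dsimp only; split_ifs
    exacts [br _, br' _]
  · intro t
    refine (gx t).trans ?_
    congr 2; funext s; by_cases hs : s < T1 <;> simp [hs]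
  · intro t
    refine (gy t).trans ?_
    congr 2; funext s; by_cases hs : s < T1 <;> simp [hs]
  · intro t
    refine (gθ t).trans ?_
    congr 2; funext s; by_cases hs : s < T1 <;> simp [hs]
  · exact (ini (hx1.trans hx0'.symm)).trans hx0
  · exact (ini (hy1.trans hy0'.symm)).trans hy0
  · exact (ini (hθ1.trans hθ0'.symm)).trans hθ0
  · simp [not_lt.mpr hT2, hx1']
  · simp [not_lt.mpr hT2, hy1']
  · simp [not_lt.mpr hT2, hθ1']

lemma dd_sign_mul {w d : ℝ} (hw : 0 < w) : ∃ c : ℝ, |c| ≤ w ∧ c * (|d| / w) = d := by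
  rcases le_total 0 d with h | h
  · exact ⟨w, by rw [abs_of_pos hw], by rw [abs_of_nonneg h]; field_simp⟩
  · exact ⟨-w, by rw [abs_neg, abs_of_pos hw], by rw [abs_of_nonpos h]; field_simp⟩

lemma DDReach.straight {wmax ρ : ℝ} (hw : 0 < wmax) (x y θ d : ℝ) :
    DDReach wmax ρ (|d| / wmax) x y θ (x + d * cos θ) (y + d * sin θ) θ := by
  obtain ⟨c, hc, hcd⟩ := dd_sign_mul (d := d) hw
  refine ⟨fun t => x + c * t * cos θ, fun t => y + c * t * sin θ, fun _ => θ,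
    ⟨fun _ => c, fun _ => c, by fun_prop, by fun_prop, fun _ => hc, fun _ => hc, ?_, ?_, ?_⟩,
    by simp, by simp, by simp, ?_, ?_, by simp⟩
  · intro t; simp; ring
  · intro t; simp; ring
  · intro t; simp
  · simp only [hcd]
  · simp only [hcd]

lemma DDReach.rotate {wmax ρ : ℝ} (hw : 0 < wmax) (hρ : 0 < ρ) (x y θ α : ℝ) :
    DDReach wmax ρ (ρ * |α| / wmax) x y θ x y (θ + α) := by
  obtain ⟨c, hc, hcd⟩ := dd_sign_mul (d := α) hw
  refine ⟨fun t => x, fun t => y, fun t => θ + c / ρ * t,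
    ⟨fun _ => -c, fun _ => c, by fun_prop, by fun_prop, fun _ => by simpa using hc,
      fun _ => hc, ?_, ?_, ?_⟩,
    by simp, by simp, by simp, by simp, by simp, ?_⟩
  · intro t; simp
  · intro t; simp
  · intro t; simp; field_simp; ring
  · simp only
    rw [← hcd]
    have : |c * (|α| / wmax)| = |α| := by rw [hcd]
    rw [this]
    field_simp

lemma DDReach.move {wmax ρ : ℝ} (hw : 0 < wmax) (hρ : 0 < ρ) (x y θ b α a : ℝ) :
    DDReach wmax ρ ((|b| + ρ * |α| + |a|) / wmax) x y θ
      (x + b * cos θ + a * cos (θ + α)) (y + b * sin θ + a * sin (θ + α)) (θ + α) := by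
  have h := ((DDReach.straight (ρ := ρ) hw x y θ b).trans (by positivity) (by positivity)
    (DDReach.rotate hw hρ _ _ θ α)).trans (by positivity) (by positivity)
    (DDReach.straight (ρ := ρ) hw _ _ (θ + α) a)
  convert h using 1
  ring

lemma DDReach.bounds {wmax ρ T x0 y0 θ0 x1 y1 θ1 : ℝ} (hρ : 0 < ρ) (hT : 0 ≤ T)
    (h : DDReach wmax ρ T x0 y0 θ0 x1 y1 θ1) :
    |(x1 - x0) * cos θ0 + (y1 - y0) * sin θ0| ≤ wmax * T ∧
    |-(x1 - x0) * sin θ0 + (y1 - y0) * cos θ0| ≤ wmax * (wmax * T / ρ) * T := by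
  obtain ⟨x, y, θ, ⟨wl, wr, ml, mr, bl, br, hx, hy, hθ⟩, hx0, hy0, hθ0, hx1, hy1, hθ1⟩ := h
  obtain ⟨mθ, iθ⟩ := dd_meas_theta ml mr bl br hθ
  have hw : 0 ≤ wmax := (abs_nonneg _).trans (bl 0)
  have ix := dd_intervalIntegrable (f := fun s => (wl s + wr s) / 2 * cos (θ s)) (by fun_prop)
    (fun s => dd_v_bound (bl s) (br s) (abs_cos_le_one (θ s))) 0 T
  have iy := dd_intervalIntegrable (f := fun s => (wl s + wr s) / 2 * sin (θ s)) (by fun_prop)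
    (fun s => dd_v_bound (bl s) (br s) (abs_sin_le_one (θ s))) 0 T
  have ex : x1 - x0 = ∫ s in (0:ℝ)..T, (wl s + wr s) / 2 * cos (θ s) := by
    rw [← hx1, ← hx0, hx T]; ring
  have ey : y1 - y0 = ∫ s in (0:ℝ)..T, (wl s + wr s) / 2 * sin (θ s) := by
    rw [← hy1, ← hy0, hy T]; ring
  have eX : (x1 - x0) * cos θ0 + (y1 - y0) * sin θ0 =
      ∫ s in (0:ℝ)..T, (wl s + wr s) / 2 * cos (θ s - θ0) := by
    rw [ex, ey, ← intervalIntegral.integral_mul_const, ← intervalIntegral.integral_mul_const,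
      ← intervalIntegral.integral_add (ix.mul_const _) (iy.mul_const _)]
    congr 1; funext s; rw [cos_sub]; ring
  have eY : -(x1 - x0) * sin θ0 + (y1 - y0) * cos θ0 =
      ∫ s in (0:ℝ)..T, (wl s + wr s) / 2 * sin (θ s - θ0) := by
    rw [ex, ey, neg_mul, neg_add_eq_sub, ← intervalIntegral.integral_mul_const,
      ← intervalIntegral.integral_mul_const,
      ← intervalIntegral.integral_sub (iy.mul_const _) (ix.mul_const _)]
    congr 1; funext s; rw [sin_sub]; ring
  have hθb : ∀ s ∈ Set.uIoc 0 T, |θ s - θ0| ≤ wmax * T / ρ := by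
    intro s hs
    rw [Set.uIoc_of_le hT] at hs
    have : θ s - θ0 = ∫ u in (0:ℝ)..s, (wr u - wl u) / (2 * ρ) := by
      rw [← hθ0, hθ s]; ring
    rw [this, ← Real.norm_eq_abs]
    have := intervalIntegral.norm_integral_le_of_norm_le_const (a := 0) (b := s) (C := wmax / ρ)
      (f := fun u => (wr u - wl u) / (2 * ρ)) (by
        intro u _
        rw [Real.norm_eq_abs, abs_div, abs_of_pos (by positivity : 0 < 2 * ρ),
          div_le_div_iff₀ (by positivity) hρ]
        have : |wr u - wl u| ≤ wmax + wmax := (abs_sub _ _).trans (add_le_add (br u) (bl u))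
        nlinarith)
    refine this.trans ?_
    rw [sub_zero, abs_of_pos hs.1, div_mul_eq_mul_div]
    gcongr
    exact hs.2
  constructor
  · rw [eX, ← Real.norm_eq_abs]
    have := intervalIntegral.norm_integral_le_of_norm_le_const (a := 0) (b := T) (C := wmax)
      (f := fun s => (wl s + wr s) / 2 * cos (θ s - θ0))
      (fun s _ => dd_v_bound (bl s) (br s) (abs_cos_le_one _))
    simpa [abs_of_nonneg hT] using this
  · rw [eY, ← Real.norm_eq_abs]
    have := intervalIntegral.norm_integral_le_of_norm_le_const (a := 0) (b := T)
      (C := wmax * (wmax * T / ρ))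
      (f := fun s => (wl s + wr s) / 2 * sin (θ s - θ0)) (by
        intro s hs
        rw [norm_mul]
        have h1 := dd_v_bound (c := 1) (bl s) (br s) (by simp)
        rw [mul_one] at h1
        have h2 : |sin (θ s - θ0)| ≤ |θ s - θ0| := abs_sin_le_abs
        exact mul_le_mul h1 (h2.trans (hθb s hs)) (abs_nonneg _) hw)
    simpa [abs_of_nonneg hT] using this

/-- The set of admissible travel times. -/
def ddTimes (wmax ρ : ℝ) (p : Plane) (θ₀ : ℝ) (q : Plane) : Set ℝ :=
  {T : ℝ | 0 ≤ T ∧ ∃ x y θ : ℝ → ℝ, IsDDTraj wmax ρ x y θ ∧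
    x 0 = p 0 ∧ y 0 = p 1 ∧ θ 0 = θ₀ ∧ x T = q 0 ∧ y T = q 1}

lemma tauDD_eq (wmax ρ : ℝ) (p : Plane) (θ₀ : ℝ) (q : Plane) :
    tauDD wmax ρ p θ₀ q = sInf (ddTimes wmax ρ p θ₀ q) := rfl

lemma mem_ddTimes {wmax ρ : ℝ} {p : Plane} {θ₀ : ℝ} {q : Plane} {T : ℝ} :
    T ∈ ddTimes wmax ρ p θ₀ q ↔ 0 ≤ T ∧ ∃ θ1, DDReach wmax ρ T (p 0) (p 1) θ₀ (q 0) (q 1) θ1 := by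
  constructor
  · rintro ⟨h, x, y, θ, h1, h2, h3, h4, h5, h6⟩
    exact ⟨h, θ T, x, y, θ, h1, h2, h3, h4, h5, h6, rfl⟩
  · rintro ⟨h, _, x, y, θ, h1, h2, h3, h4, h5, h6, _⟩
    exact ⟨h, x, y, θ, h1, h2, h3, h4, h5, h6⟩

lemma ddTimes_bdd (wmax ρ : ℝ) (p : Plane) (θ₀ : ℝ) (q : Plane) :
    BddBelow (ddTimes wmax ρ p θ₀ q) := ⟨0, fun _ h => h.1⟩

lemma tauDD_nonneg (wmax ρ : ℝ) (p : Plane) (θ₀ : ℝ) (q : Plane) :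
    0 ≤ tauDD wmax ρ p θ₀ q := Real.sInf_nonneg fun _ h => h.1

/-- Moving frame coordinates. -/
def ddFrame (p : Plane) (θ₀ : ℝ) (z : ℝ × ℝ) : Plane :=
  !₂[p 0 + z.1 * cos θ₀ - z.2 * sin θ₀, p 1 + z.1 * sin θ₀ + z.2 * cos θ₀]

lemma ddFrame_surj (p : Plane) (θ₀ : ℝ) (q : Plane) :
    ddFrame p θ₀ ((q 0 - p 0) * cos θ₀ + (q 1 - p 1) * sin θ₀,
      -(q 0 - p 0) * sin θ₀ + (q 1 - p 1) * cos θ₀) = q := by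
  ext i
  fin_cases i
  · simp [ddFrame]
    linear_combination (q 0 - p 0) * Real.cos_sq_add_sin_sq θ₀
  · simp [ddFrame]
    linear_combination (q 1 - p 1) * Real.cos_sq_add_sin_sq θ₀

lemma dd_arctan_le {u : ℝ} (h : 0 ≤ u) : arctan u ≤ u := by
  have := Real.le_tan (arctan_nonneg.mpr h) (arctan_lt_pi_div_two u)
  rwa [tan_arctan] at this

lemma dd_rot_mem {wmax ρ : ℝ} (hw : 0 < wmax) (hρ : 0 < ρ) (p : Plane) (θ₀ : ℝ)
    {X Y : ℝ} (h : X = 0 → Y = 0) : ∃ T ∈ ddTimes wmax ρ p θ₀ (ddFrame p θ₀ (X, Y)),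
      T ≤ (ρ * (|Y| / |X|) + |X| + |Y|) / wmax := by
  set α := arctan (Y / X) with hα
  have hc : 0 < cos α := cos_arctan_pos _
  have ht : tan α = Y / X := tan_arctan _
  have hY : X / cos α * sin α = Y := by
    rw [div_mul_eq_mul_div, mul_div_assoc, ← tan_eq_sin_div_cos, ht]
    by_cases hX : X = 0
    · simp [hX, h hX]
    · field_simp
  have hX : X / cos α * cos α = X := by field_simp
  refine ⟨(|0| + ρ * |α| + |X / cos α|) / wmax, mem_ddTimes.mpr ⟨by positivity, θ₀ + α, ?_⟩, ?_⟩
  · convert DDReach.move hw hρ (p 0) (p 1) θ₀ 0 α (X / cos α) using 1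
    · simp only [ddFrame, cos_add]
      simp
      linear_combination (-cos θ₀) * hX + sin θ₀ * hY
    · simp only [ddFrame, sin_add]
      simp
      linear_combination (-sin θ₀) * hX - cos θ₀ * hY
  · have h1 : |α| ≤ |Y| / |X| := by
      rw [← abs_div]
      rcases le_total 0 (Y / X) with h0 | h0
      · rw [abs_of_nonneg h0, abs_of_nonneg (arctan_nonneg.mpr h0)]
        exact dd_arctan_le h0
      · rw [abs_of_nonpos h0, abs_of_nonpos (by rw [hα, ← neg_nonneg, ← arctan_neg]; exact arctan_nonneg.mpr (neg_nonneg.mpr h0)), hα, ← arctan_neg]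
        exact dd_arctan_le (neg_nonneg.mpr h0)
    have h2 : |X / cos α| ≤ |X| + |Y| := by
      apply abs_le_of_sq_le_sq _ (by positivity)
      have e : (X / cos α)^2 = X^2 + Y^2 := by
        rw [← hY]; field_simp; linear_combination (- X^2) * Real.cos_sq_add_sin_sq α
      rw [e, ← sq_abs X, ← sq_abs Y]
      nlinarith [abs_nonneg X, abs_nonneg Y, mul_nonneg (abs_nonneg X) (abs_nonneg Y)]
    rw [abs_zero]
    gcongr ?_ / wmax
    nlinarith

lemma dd_move_small {wmax ρ : ℝ} (hw : 0 < wmax) (hρ : 0 < ρ) {α : ℝ} (h0 : 0 < α) (h1 : α ≤ 1)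
    (x y θ x' y' : ℝ) : ∃ T θ', 0 ≤ T ∧ DDReach wmax ρ T x y θ x' y' θ' ∧
      T ≤ ((|x' - x| + |y' - y|) * (1 + 2 / sin α) + ρ * α) / wmax := by
  have hs : 0 < sin α := sin_pos_of_pos_of_le_one h0 h1
  set X := (x' - x) * cos θ + (y' - y) * sin θ with hX
  set Y := -(x' - x) * sin θ + (y' - y) * cos θ with hY
  set a := Y / sin α with ha
  have haY : a * sin α = Y := by rw [ha]; field_simp
  have key : ∀ u v c s : ℝ, |c| ≤ 1 → |s| ≤ 1 → |u * c + v * s| ≤ |u| + |v| := by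
    intro u v c s hc hs
    refine (abs_add_le _ _).trans ?_
    rw [abs_mul, abs_mul]
    nlinarith [abs_nonneg u, abs_nonneg v]
  have bX : |X| ≤ |x' - x| + |y' - y| := key _ _ _ _ (abs_cos_le_one _) (abs_sin_le_one _)
  have bY : |Y| ≤ |x' - x| + |y' - y| := by
    have := key (-(x' - x)) (y' - y) _ _ (abs_sin_le_one θ) (abs_cos_le_one θ)
    rwa [abs_neg] at this
  refine ⟨(|X - a * cos α| + ρ * |α| + |a|) / wmax, θ + α, ?_, ?_, ?_⟩
  · positivity
  · convert DDReach.move hw hρ x y θ (X - a * cos α) α a using 1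
    · rw [cos_add]
      have e : x' = x + X * cos θ - Y * sin θ := by
        rw [hX, hY]; linear_combination (-(x' - x)) * Real.cos_sq_add_sin_sq θ
      linear_combination e + sin θ * haY
    · rw [sin_add]
      have e : y' = y + X * sin θ + Y * cos θ := by
        rw [hX, hY]; linear_combination (-(y' - y)) * Real.cos_sq_add_sin_sq θ
      linear_combination e - cos θ * haY
  · rw [abs_of_pos h0]
    have b1 : |a| ≤ (|x' - x| + |y' - y|) / sin α := by
      rw [ha, abs_div, abs_of_pos hs]; gcongr
    have b2 : |X - a * cos α| ≤ |X| + |a| := by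
      refine (abs_sub _ _).trans ?_
      rw [abs_mul]
      nlinarith [abs_nonneg a, abs_cos_le_one α]
    gcongr ?_ / wmax
    have : (|x' - x| + |y' - y|) * (1 + 2 / sin α) =
      (|x' - x| + |y' - y|) + 2 * ((|x' - x| + |y' - y|) / sin α) := by ring
    rw [this]
    linarith

lemma ddTimes_nonempty {wmax ρ : ℝ} (hw : 0 < wmax) (hρ : 0 < ρ) (p : Plane) (θ₀ : ℝ) (q : Plane) :
    (ddTimes wmax ρ p θ₀ q).Nonempty := by
  obtain ⟨T, θ', h0, h1, _⟩ :=
    dd_move_small hw hρ zero_lt_one le_rfl (p 0) (p 1) θ₀ (q 0) (q 1)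
  exact ⟨T, mem_ddTimes.mpr ⟨h0, θ', h1⟩⟩

lemma dd_modulus {wmax ρ : ℝ} (hw : 0 < wmax) (hρ : 0 < ρ) (p : Plane) (θ₀ : ℝ) {α : ℝ}
    (h0 : 0 < α) (h1 : α ≤ 1) (q q' : Plane) :
    tauDD wmax ρ p θ₀ q' ≤ tauDD wmax ρ p θ₀ q +
      ((2 * dist q q') * (1 + 2 / sin α) + ρ * α) / wmax := by
  have hs : 0 < sin α := sin_pos_of_pos_of_le_one h0 h1
  rw [← sub_le_iff_le_add]
  rw [tauDD_eq _ _ _ _ q]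
  apply le_csInf (ddTimes_nonempty hw hρ p θ₀ q)
  intro T hT
  obtain ⟨hT0, θ1, hT1⟩ := mem_ddTimes.mp hT
  obtain ⟨T', θ', h0', h1', h2'⟩ := dd_move_small hw hρ h0 h1 (q 0) (q 1) θ1 (q' 0) (q' 1)
  have : tauDD wmax ρ p θ₀ q' ≤ T + T' :=
    csInf_le (ddTimes_bdd _ _ _ _ _) (mem_ddTimes.mpr ⟨by positivity, θ', hT1.trans hT0 h0' h1'⟩)
  have hd : ∀ i, |q' i - q i| ≤ dist q q' := by
    intro i
    have := PiLp.norm_apply_le (q' - q) i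
    rw [dist_comm, dist_eq_norm]
    simpa using this
  have : T' ≤ ((2 * dist q q') * (1 + 2 / sin α) + ρ * α) / wmax := by
    refine h2'.trans ?_
    gcongr
    linarith [hd 0, hd 1]
  linarith

lemma tauDD_continuous {wmax ρ : ℝ} (hw : 0 < wmax) (hρ : 0 < ρ) (p : Plane) (θ₀ : ℝ) :
    Continuous (tauDD wmax ρ p θ₀) := by
  rw [Metric.continuous_iff]
  intro q ε hε
  set α := min 1 (ε * wmax / (2 * ρ)) with hα
  have h0 : 0 < α := by positivity
  have h1 : α ≤ 1 := min_le_left _ _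
  have hs : 0 < sin α := sin_pos_of_pos_of_le_one h0 h1
  have h2 : ρ * α ≤ ε * wmax / 2 := by
    have : α ≤ ε * wmax / (2 * ρ) := min_le_right _ _
    calc ρ * α ≤ ρ * (ε * wmax / (2 * ρ)) := by gcongr
      _ = _ := by field_simp
  refine ⟨ε * wmax / (4 * (1 + 2 / sin α)), by positivity, fun q' hq' => ?_⟩
  have h3 : ((2 * dist q' q) * (1 + 2 / sin α) + ρ * α) / wmax < ε := by
    rw [div_lt_iff₀ hw]
    rw [lt_div_iff₀ (by positivity)] at hq'
    nlinarith
  rw [Real.dist_eq, abs_lt]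
  have A := dd_modulus hw hρ p θ₀ h0 h1 q q'
  have B := dd_modulus hw hρ p θ₀ h0 h1 q' q
  rw [dist_comm q q'] at A
  constructor <;> linarith

lemma ddFrame_coords (p : Plane) (θ₀ X Y : ℝ) :
    (ddFrame p θ₀ (X, Y) 0 - p 0) * cos θ₀ + (ddFrame p θ₀ (X, Y) 1 - p 1) * sin θ₀ = X ∧
    -(ddFrame p θ₀ (X, Y) 0 - p 0) * sin θ₀ + (ddFrame p θ₀ (X, Y) 1 - p 1) * cos θ₀ = Y := by
  constructor
  · simp [ddFrame]
    linear_combination X * Real.cos_sq_add_sin_sq θ₀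
  · simp [ddFrame]
    linear_combination Y * Real.cos_sq_add_sin_sq θ₀

lemma dd_lower {wmax ρ : ℝ} (hw : 0 < wmax) (hρ : 0 < ρ) (p : Plane) (θ₀ X Y : ℝ) :
    |X| / wmax ≤ tauDD wmax ρ p θ₀ (ddFrame p θ₀ (X, Y)) := by
  apply le_csInf (ddTimes_nonempty hw hρ p θ₀ _)
  intro T hT
  obtain ⟨hT0, θ1, hT1⟩ := mem_ddTimes.mp hT
  have := (hT1.bounds hρ hT0).1
  rw [(ddFrame_coords p θ₀ X Y).1] at this
  rw [div_le_iff₀ hw]; linarith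

lemma dd_box {wmax ρ : ℝ} (hw : 0 < wmax) (hρ : 0 < ρ) (p : Plane) (θ₀ X Y : ℝ) {t : ℝ} (ht : 0 < t)
    (h : tauDD wmax ρ p θ₀ (ddFrame p θ₀ (X, Y)) ≤ t) :
    |X| ≤ wmax * (2 * t) ∧ |Y| ≤ wmax * (wmax * (2 * t) / ρ) * (2 * t) := by
  obtain ⟨T, hT, hlt⟩ := exists_lt_of_csInf_lt (ddTimes_nonempty hw hρ p θ₀ _)
    (show sInf (ddTimes wmax ρ p θ₀ (ddFrame p θ₀ (X, Y))) < 2 * t by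
      rw [← tauDD_eq]; linarith)
  obtain ⟨hT0, θ1, hT1⟩ := mem_ddTimes.mp hT
  have h1 := hT1.bounds hρ hT0
  rw [(ddFrame_coords p θ₀ X Y).1, (ddFrame_coords p θ₀ X Y).2] at h1
  refine ⟨h1.1.trans (by gcongr), h1.2.trans (by gcongr)⟩

lemma ddFrame_mp (p : Plane) (θ₀ : ℝ) : MeasurePreserving (ddFrame p θ₀) ∧
    MeasurableEmbedding (ddFrame p θ₀) := by
  let e1 : ℝ × ℝ ≃ᵐ ℂ := Complex.measurableEquivRealProd.symm
  let L : ℂ ≃ₗᵢ[ℝ] Plane := (rotation (Circle.exp θ₀)).trans Complex.orthonormalBasisOneI.repr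
  have h1 : MeasurePreserving e1 := Complex.volume_preserving_equiv_real_prod.symm
  have h2 : MeasurePreserving L := L.measurePreserving
  have h3 : MeasurePreserving (fun q : Plane => p + q) := measurePreserving_add_left volume p
  have e : ddFrame p θ₀ = (fun q : Plane => p + q) ∘ L ∘ e1 := by
    funext z
    ext i
    fin_cases i
    · simp [ddFrame, L, e1, Complex.measurableEquivRealProd, rotation_apply, Circle.coe_exp,
        Complex.exp_ofReal_mul_I_re, Complex.exp_ofReal_mul_I_im]
      ring
    · simp [ddFrame, L, e1, Complex.measurableEquivRealProd, rotation_apply, Circle.coe_exp,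
        Complex.exp_ofReal_mul_I_re, Complex.exp_ofReal_mul_I_im]
      ring
  rw [e]
  exact ⟨h3.comp (h2.comp h1), (measurableEmbedding_addLeft p).comp
    (L.toHomeomorph.measurableEmbedding.comp e1.measurableEmbedding)⟩

/-- An explicit set of points reachable in time `t`, in frame coordinates. -/
def ddLens (W c : ℝ) : Set (ℝ × ℝ) :=
  {z | |z.1| ≤ W ∧ |z.2| ≤ (W - |z.1|) * |z.1| / c}

lemma ddLens_meas (W c : ℝ) : MeasurableSet (ddLens W c) := by
  have h1 : Measurable fun z : ℝ × ℝ => |z.1| := by fun_prop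
  have h2 : Measurable fun z : ℝ × ℝ => |z.2| := by fun_prop
  have h3 : Measurable fun z : ℝ × ℝ => (W - |z.1|) * |z.1| / c := by fun_prop
  exact (measurableSet_le h1 measurable_const).inter (measurableSet_le h2 h3)

lemma ddLens_integral {W c w : ℝ} (hW : 0 < W) (hc : 0 < c)
    (hi : IntegrableOn (fun z : ℝ × ℝ => |z.1| / w) (ddLens W c)) :
    ∫ z in ddLens W c, |z.1| / w = W ^ 4 / (3 * c * w) := by
  rw [← integral_indicator (ddLens_meas W c), Measure.volume_eq_prod, integral_prod]
  swap
  · rw [← Measure.volume_eq_prod]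
    exact (integrable_indicator_iff (ddLens_meas W c)).mpr hi
  have inner : ∀ x : ℝ, ∫ y, (ddLens W c).indicator (fun z : ℝ × ℝ => |z.1| / w) (x, y) =
      (fun r => (Set.Iic W).indicator (fun r => 2 * ((W - r) * r / c) * (r / w)) r) |x| := by
    intro x
    by_cases hx : |x| ≤ W
    · have h0 : 0 ≤ (W - |x|) * |x| / c :=
        div_nonneg (mul_nonneg (by linarith) (abs_nonneg _)) hc.le
      have : (fun y => (ddLens W c).indicator (fun z : ℝ × ℝ => |z.1| / w) (x, y)) =
          (Set.Icc (-((W - |x|) * |x| / c)) ((W - |x|) * |x| / c)).indicator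
            (fun _ => |x| / w) := by
        funext y
        simp only [Set.indicator, ddLens, Set.mem_ofPred_eq, hx, true_and, Set.mem_Icc, abs_le (a := y)]
      rw [this, integral_indicator measurableSet_Icc, setIntegral_const]
      simp only [Set.indicator, Set.mem_Iic, hx, if_true]
      rw [Real.volume_real_Icc_of_le (by linarith), smul_eq_mul]
      ring
    · simp [Set.indicator, ddLens, hx]
  simp_rw [inner]
  rw [integral_comp_abs (f := (Set.Iic W).indicator (fun r => 2 * ((W - r) * r / c) * (r / w))),
    setIntegral_indicator measurableSet_Iic, Set.Ioi_inter_Iic,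
    ← intervalIntegral.integral_of_le hW.le]
  have e : (fun r : ℝ => 2 * ((W - r) * r / c) * (r / w)) =
      fun r => (2 * W / (c * w)) * r ^ 2 - (2 / (c * w)) * r ^ 3 := by
    funext r; simp only [div_eq_mul_inv, mul_inv]; ring
  rw [e, intervalIntegral.integral_sub
    (Continuous.intervalIntegrable (by fun_prop) _ _)
    (Continuous.intervalIntegrable (by fun_prop) _ _),
    intervalIntegral.integral_const_mul, intervalIntegral.integral_const_mul, integral_pow,
    integral_pow]
  simp only [div_eq_mul_inv, mul_inv]
  norm_num
  ring

lemma dd_main {wmax ρ : ℝ} (hw : 0 < wmax) (hρ : 0 < ρ) (p : Plane) (θ₀ : ℝ) {t : ℝ} (ht : 0 < t) :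
    (wmax * t) ^ 4 / (3 * (ρ + wmax * t) * wmax) ≤
      ∫ q in reachDD wmax ρ p θ₀ t, tauDD wmax ρ p θ₀ q ∧
    ∫ q in reachDD wmax ρ p θ₀ t, tauDD wmax ρ p θ₀ q ≤ 32 * wmax ^ 3 / ρ * t ^ 4 := by
  obtain ⟨mp, me⟩ := ddFrame_mp p θ₀
  set g : ℝ × ℝ → ℝ := fun z => tauDD wmax ρ p θ₀ (ddFrame p θ₀ z) with hg
  have mg : Measurable g := (tauDD_continuous hw hρ p θ₀).measurable.comp me.measurable
  set A : Set (ℝ × ℝ) := {z | g z ≤ t} with hA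
  have mA : MeasurableSet A := measurableSet_le mg measurable_const
  have eI : ∫ q in reachDD wmax ρ p θ₀ t, tauDD wmax ρ p θ₀ q = ∫ z in A, g z :=
    (mp.setIntegral_preimage_emb me (tauDD wmax ρ p θ₀) (reachDD wmax ρ p θ₀ t)).symm
  set a := wmax * (2 * t) with ha
  set b := wmax * (wmax * (2 * t) / ρ) * (2 * t) with hb
  have a0 : 0 ≤ a := by positivity
  have b0 : 0 ≤ b := by positivity
  set B : Set (ℝ × ℝ) := Set.Icc (-a) a ×ˢ Set.Icc (-b) b with hB
  have vB : volume B = ENNReal.ofReal ((2 * a) * (2 * b)) := by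
    rw [hB, Measure.volume_eq_prod, Measure.prod_prod, Real.volume_Icc, Real.volume_Icc,
      ← ENNReal.ofReal_mul (by linarith)]
    congr 1; ring
  have AB : A ⊆ B := by
    rintro ⟨X, Y⟩ hz
    have := dd_box hw hρ p θ₀ X Y ht hz
    exact ⟨abs_le.mp this.1, abs_le.mp this.2⟩
  have fA : volume A ≠ ⊤ := ne_top_of_le_ne_top (by rw [vB]; simp) (measure_mono AB)
  have g0 : ∀ z, 0 ≤ g z := fun z => tauDD_nonneg _ _ _ _ _
  have iA : IntegrableOn g A := by
    refine Measure.integrableOn_of_bounded (M := t) fA mg.aestronglyMeasurable ?_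
    refine (ae_restrict_iff' mA).mpr (Eventually.of_forall fun z hz => ?_)
    rw [Real.norm_eq_abs, abs_of_nonneg (g0 z)]; exact hz
  rw [eI]
  constructor
  · set S := ddLens (wmax * t) (ρ + wmax * t) with hS
    have hW : 0 < wmax * t := by positivity
    have SA : S ⊆ A := by
      rintro ⟨X, Y⟩ ⟨h1, h2⟩
      simp only at h1 h2
      obtain ⟨T, hT, hle⟩ := dd_rot_mem hw hρ p θ₀ (X := X) (Y := Y) (by
        intro h; rw [h] at h2; simpa using h2)
      have h3 : g (X, Y) ≤ T := csInf_le (ddTimes_bdd _ _ _ _ _) hT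
      refine (h3.trans hle).trans ?_
      rw [div_le_iff₀ hw]
      rw [le_div_iff₀ (by positivity)] at h2
      rcases eq_or_lt_of_le (abs_nonneg X) with h0 | h0
      · rw [← h0] at h2 ⊢
        have : |Y| ≤ 0 := by
          have : 0 < ρ + wmax * t := by positivity
          nlinarith
        simp; nlinarith
      · have e : |Y| / |X| * |X| = |Y| := by field_simp
        have h5 : 0 ≤ |Y| / |X| := by positivity
        have h4 : |Y| / |X| * (ρ + wmax * t) ≤ wmax * t - |X| := by
          rw [div_mul_eq_mul_div, div_le_iff₀ h0]; exact h2
        have : |Y| ≤ |Y| / |X| * (wmax * t) := by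
          calc |Y| = |Y| / |X| * |X| := e.symm
            _ ≤ _ := by gcongr
        nlinarith
    have le : ∀ z, |z.1| / wmax ≤ g z := fun z => dd_lower hw hρ p θ₀ z.1 z.2
    have iS : IntegrableOn (fun z : ℝ × ℝ => |z.1| / wmax) S := by
      refine Integrable.mono (iA.mono_set SA)
        (by fun_prop : Measurable (fun z : ℝ × ℝ => |z.1| / wmax)).aestronglyMeasurable ?_
      refine Eventually.of_forall fun z => ?_
      rw [Real.norm_eq_abs, Real.norm_eq_abs, abs_of_nonneg (g0 z), abs_of_nonneg (by positivity)]
      exact le z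
    rw [← ddLens_integral hW (by positivity) iS]
    calc _ ≤ ∫ z in S, g z := setIntegral_mono iS (iA.mono_set SA) le
      _ ≤ _ := setIntegral_mono_set iA (Eventually.of_forall g0) (Eventually.of_forall SA)
  · have h1 : ∫ z in A, g z ≤ t * (volume A).toReal := by
      refine (le_abs_self _).trans ?_
      exact norm_setIntegral_le_of_norm_le_const fA.lt_top fun z hz => by
        rw [Real.norm_eq_abs, abs_of_nonneg (g0 z)]; exact hz
    have h2 : (volume A).toReal ≤ (2 * a) * (2 * b) := by
      refine (ENNReal.toReal_mono (by rw [vB]; simp) (measure_mono AB)).trans ?_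
      rw [vB, ENNReal.toReal_ofReal (by positivity)]
    refine (h1.trans (mul_le_mul_of_nonneg_left h2 ht.le)).trans (le_of_eq ?_)
    rw [ha, hb]; ring

/-- small-time lower bound on the integral of the travel time over the
reachable set of a DD robot:
`liminf_{t→0⁺} (∫_{R_t(g)} τ_DD(g,q) dq) / t⁴ ≥ w_max³ / (6ρ)`. -/
theorem dd_travel_time_integral_lower_bound
    (wmax ρ : ℝ) (hw : 0 < wmax) (hρ : 0 < ρ) (p : Plane) (θ₀ : ℝ) :
    wmax ^ 3 / (6 * ρ) ≤
      Filter.liminf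
        (fun t : ℝ =>
          (∫ q in reachDD wmax ρ p θ₀ t, tauDD wmax ρ p θ₀ q) / t ^ 4)
        (𝓝[>] 0) := by

  apply le_liminf_of_le
  · refine IsBoundedUnder.isCoboundedUnder_ge ⟨32 * wmax ^ 3 / ρ, ?_⟩
    rw [eventually_map]
    filter_upwards [self_mem_nhdsWithin] with t ht
    have ht : 0 < t := ht
    rw [div_le_iff₀ (by positivity)]
    exact (dd_main hw hρ p θ₀ ht).2
  · have hlt : ∀ᶠ t in 𝓝[>] (0:ℝ), t < ρ / wmax :=
      nhdsWithin_le_nhds (Iio_mem_nhds (by positivity))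
    filter_upwards [self_mem_nhdsWithin, hlt] with t ht ht2
    have ht : 0 < t := ht
    rw [le_div_iff₀ (by positivity)]
    refine le_trans ?_ (dd_main hw hρ p θ₀ ht).1
    rw [lt_div_iff₀ hw] at ht2
    rw [div_mul_eq_mul_div, div_le_div_iff₀ (by positivity) (by positivity)]
    have : 3 * (ρ + wmax * t) ≤ 6 * ρ := by linarith
    calc wmax ^ 3 * t ^ 4 * (3 * (ρ + wmax * t) * wmax)
        = (wmax * t) ^ 4 * (3 * (ρ + wmax * t)) := by ring
      _ ≤ (wmax * t) ^ 4 * (6 * ρ) := by gcongr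
end
end
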